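/- For n = 2 and every integer k ≥ 1, the image of the cylinder B(k) := {x ∈ B² : 1/(k+1) < x₂ ≤ 1/k} under the 2-dimensional MSA map S is exactly S '' B(k) = {y ∈ B² : y₂ < y₁ and k·y₁ + y₂ ≥ 1}. Consequently S '' B(k) ⊊ S '' B(k+1) for all k ≥ 1, and no cylinder of rank 1 is full, i.e. S '' B(k) ≠ B² for every k. -/

import Mathlib

open Matrix Filter

/-- Entry access with junk value `0` outside the index range: `ent x m = x_{m+1}`
(0-based coordinate `m`) for `m < n`, and `0` otherwise. -/
noncomputable def ent {n : ℕ} (x : Fin n → ℝ) (m : ℕ) : ℝ :=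
  if h : m < n then x ⟨m, h⟩ else 0

/-- `B^n = {x ∈ ℝ^n : 1 ≥ x₁ ≥ x₂ ≥ ⋯ ≥ x_n ≥ 0}` (the stated antitonicity of
the `0`-extended sequence `ent x` encodes both the ordering and `x_n ≥ 0`). -/
def Bset (n : ℕ) : Set (Fin n → ℝ) :=
  {x | ent x 0 ≤ 1 ∧ ∀ i j : ℕ, i ≤ j → ent x j ≤ ent x i}

/-- The MSA digit `k = ⌊1/x_n⌋`. -/
noncomputable def msaDigit {n : ℕ} (x : Fin n → ℝ) : ℤ :=
  ⌊(ent x (n - 1))⁻¹⌋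

/-- The multiplicative Selmer algorithm (MSA) map
`S(x₁,…,x_n) = (x₂/x₁, …, x_n/x₁, (1 − k·x_n)/x₁)` with `k = ⌊1/x_n⌋`. -/
noncomputable def msaS {n : ℕ} (x : Fin n → ℝ) : Fin n → ℝ := fun i =>
  if (i : ℕ) + 1 < n then ent x ((i : ℕ) + 1) / ent x 0
  else (1 - (msaDigit x : ℝ) * ent x (n - 1)) / ent x 0

/-- The rank-1 cylinder `B(k) = {x ∈ B² : 1/(k+1) < x₂ ≤ 1/k}` of the 2-dimensional MSA. -/
noncomputable def msaCell2 (k : ℤ) : Set (Fin 2 → ℝ) :=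
  {x | x ∈ Bset 2 ∧ 1 / ((k : ℝ) + 1) < x 1 ∧ x 1 ≤ 1 / (k : ℝ)}

/-!
In the homogeneous coordinates `(1 : x₁ : … : x_n)` the MSA acts on the cylinder of digit `k` as the
linear map `(1, x₁, …, x_n) ↦ (x₁, …, x_n, 1 - k * x_n)`, so a preimage of `y` must be
`(1/d, y₁/d, …, y_{n-1}/d)` with `d = k * y_{n-1} + y_n`. Under this inverse branch the inequality
`x₁ ≤ 1` becomes `1 ≤ d` and `1 < (k + 1) * x_n` becomes `y_n < y_{n-1}`, while the remaining
inequalities express `y ∈ B^n`.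
-/

theorem antitone_snoc_iff {α : Type*} [Preorder α] {n : ℕ} {f : Fin (n + 1) → α} {a : α} :
    Antitone (Fin.snoc f a : Fin (n + 2) → α) ↔ Antitone f ∧ a ≤ f (Fin.last n) := by
  simp only [Fin.antitone_iff_succ_le, Fin.forall_fin_succ' (n := n), Fin.succ_castSucc,
    Fin.succ_last, Fin.snoc_castSucc, Fin.snoc_last]

theorem floor_inv_eq_iff {K : Type*} [Field K] [LinearOrder K] [IsStrictOrderedRing K]
    [FloorRing K] {a : K} {k : ℤ} (hk : 0 < k) :
    ⌊a⁻¹⌋ = k ↔ k * a ≤ 1 ∧ 1 < (k + 1) * a := by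
  have hk' : (0 : K) < k := Int.cast_pos.2 hk
  rw [Int.floor_eq_iff]
  rcases le_or_gt a 0 with ha | ha
  · have inv_nonpos : a⁻¹ ≤ 0 := inv_nonpos.2 ha
    have mul_nonpos : (k + 1) * a ≤ 0 := mul_nonpos_of_nonneg_of_nonpos (by positivity) ha
    constructor <;> rintro ⟨_, _⟩ <;> linarith
  · rw [← one_div, le_div_iff₀ ha, div_lt_iff₀ ha]

section Entries

variable {n : ℕ}

theorem ent_val (x : Fin n → ℝ) (i : Fin n) : ent x i = x i :=
  dif_pos i.isLt

theorem ent_zero (x : Fin (n + 1) → ℝ) : ent x 0 = x 0 :=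
  ent_val x 0

theorem ent_last (x : Fin (n + 1) → ℝ) : ent x n = x (Fin.last n) :=
  ent_val x (Fin.last n)

theorem ent_of_le (x : Fin n → ℝ) {m : ℕ} (h : n ≤ m) : ent x m = 0 :=
  dif_neg h.not_gt

theorem mem_Bset_succ {x : Fin (n + 1) → ℝ} :
    x ∈ Bset (n + 1) ↔ x 0 ≤ 1 ∧ Antitone x ∧ 0 ≤ x (Fin.last n) := by
  rw [Bset, Set.mem_ofPred_eq, ent_zero]
  refine and_congr_right fun _ =>
    ⟨fun h => ⟨fun i j hij => ?_, ?_⟩, fun ⟨anti, nonneg⟩ i j hij => ?_⟩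
  · simpa only [ent_val] using h i j hij
  · simpa only [ent_last, ent_of_le x le_rfl] using h n (n + 1) n.le_succ
  · rcases lt_or_ge j (n + 1) with hj | hj
    · lift j to Fin (n + 1) using hj
      lift i to Fin (n + 1) using hij.trans_lt j.isLt
      simpa only [ent_val] using anti hij
    · rw [ent_of_le x hj]
      rcases lt_or_ge i (n + 1) with hi | hi
      · lift i to Fin (n + 1) using hi
        simpa only [ent_val] using nonneg.trans (anti i.le_last)
      · exact (ent_of_le x hi).ge

theorem zero_mem_Bset : (0 : Fin n → ℝ) ∈ Bset n := by
  simp [Bset, ent]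

theorem msaDigit_eq_floor_inv_last (x : Fin (n + 1) → ℝ) :
    msaDigit x = ⌊(x (Fin.last n))⁻¹⌋ :=
  congrArg (fun t : ℝ => ⌊t⁻¹⌋) (ent_last x)

theorem msaS_eq_snoc (x : Fin (n + 1) → ℝ) :
    msaS x = Fin.snoc (fun i : Fin n => x i.succ / x 0)
      ((1 - msaDigit x * x (Fin.last n)) / x 0) := by
  funext i
  cases i using Fin.lastCases with
  | last => simp [msaS, ent_zero, ent_last]
  | cast i =>
    have ent_succ : ent x (i + 1) = x i.succ := ent_val x i.succ
    simp [msaS, ent_zero, ent_succ]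

end Entries

/-- The rank-1 cylinder of the `n`-dimensional MSA: the points of `B^n` with digit `k`. -/
def msaCylinder (n : ℕ) (k : ℤ) : Set (Fin n → ℝ) :=
  {x | x ∈ Bset n ∧ msaDigit x = k}

/-- The set `{y ∈ B^n : y_n < y_{n-1} and k * y_{n-1} + y_n ≥ 1}`, which is the image of the rank-1
cylinder of digit `k`. The dimension is written `n + 2` so that `y_{n-1}` exists. -/
def msaRange (n : ℕ) (k : ℤ) : Set (Fin (n + 2) → ℝ) :=
  {y | y ∈ Bset (n + 2) ∧ y (Fin.last (n + 1)) < y (Fin.last n).castSucc ∧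
    1 ≤ (k : ℝ) * y (Fin.last n).castSucc + y (Fin.last (n + 1))}

/-- The inverse branch of the MSA on the rank-1 cylinder of digit `k`, that is
`y ↦ (1/d, y₁/d, …, y_{n-1}/d)` with `d = k * y_{n-1} + y_n`. -/
noncomputable def msaInverseBranch {n : ℕ} (k : ℤ) (y : Fin (n + 2) → ℝ) : Fin (n + 2) → ℝ :=
  let d : ℝ := k * y (Fin.last n).castSucc + y (Fin.last (n + 1))
  vecCons (1 / d) fun i => y i.castSucc / d

section Cylinder

variable {n : ℕ} {k l : ℤ}

theorem mem_msaCylinder_succ (hk : 0 < k) {x : Fin (n + 1) → ℝ} :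
    x ∈ msaCylinder (n + 1) k ↔ x ∈ Bset (n + 1) ∧
      k * x (Fin.last n) ≤ 1 ∧ 1 < ((k : ℝ) + 1) * x (Fin.last n) := by
  rw [msaCylinder, Set.mem_ofPred_eq, msaDigit_eq_floor_inv_last, floor_inv_eq_iff hk]

theorem msaCell2_eq_msaCylinder (hk : 0 < k) : msaCell2 k = msaCylinder 2 k := by
  have hk' : (0 : ℝ) < k := Int.cast_pos.2 hk
  ext x
  rw [mem_msaCylinder_succ hk, msaCell2, Set.mem_ofPred_eq, div_lt_iff₀' (by positivity),
    le_div_iff₀' hk', and_comm (a := 1 < _)]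
  rfl

theorem mapsTo_msaS (hk : 0 < k) :
    Set.MapsTo msaS (msaCylinder (n + 2) k) (msaRange n k) := by
  intro x hx
  obtain ⟨mem_B, mul_le, lt_mul⟩ := (mem_msaCylinder_succ hk).1 hx
  obtain ⟨head_le, anti, -⟩ := mem_Bset_succ.1 mem_B
  have last_pos : 0 < x (Fin.last (n + 1)) :=
    pos_of_mul_pos_right (one_pos.trans lt_mul) (by positivity)
  have head_pos : 0 < x 0 := last_pos.trans_le (anti (Fin.zero_le _))
  have rem_lt : (1 - k * x (Fin.last (n + 1))) / x 0 < x (Fin.last (n + 1)) / x 0 :=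
    div_lt_div_of_pos_right (by linarith) head_pos
  have denom_eq : k * (x (Fin.last (n + 1)) / x 0) + (1 - k * x (Fin.last (n + 1))) / x 0
      = 1 / x 0 := by ring
  rw [msaS_eq_snoc, hx.2]
  refine ⟨mem_Bset_succ.2 ⟨?_, antitone_snoc_iff.2 ⟨fun i j hij => ?_, rem_lt.le⟩, ?_⟩, ?_, ?_⟩
  · exact (div_le_one head_pos).2 (anti (Fin.zero_le _))
  · exact div_le_div_of_nonneg_right (anti (Fin.succ_le_succ_iff.2 hij)) head_pos.le
  · rw [Fin.snoc_last]
    exact div_nonneg (sub_nonneg.2 mul_le) head_pos.le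
  · simpa only [Fin.snoc_last, Fin.snoc_castSucc, Fin.succ_last] using rem_lt
  · rw [Fin.snoc_last, Fin.snoc_castSucc, Fin.succ_last, denom_eq]
    exact (one_le_div head_pos).2 head_le

theorem mapsTo_msaInverseBranch (hk : 0 < k) :
    Set.MapsTo (msaInverseBranch k) (msaRange n k) (msaCylinder (n + 2) k) := by
  rintro y ⟨mem_B, last_lt, one_le⟩
  obtain ⟨head_le, anti, last_nonneg⟩ := mem_Bset_succ.1 mem_B
  have d_pos : 0 < (k : ℝ) * y (Fin.last n).castSucc + y (Fin.last (n + 1)) :=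
    one_pos.trans_le one_le
  refine (mem_msaCylinder_succ hk).2
    ⟨mem_Bset_succ.2 ⟨?_, antitone_vecCons.2 ⟨?_, fun i j hij => ?_⟩, ?_⟩, ?_, ?_⟩
  · exact (div_le_one d_pos).2 one_le
  · exact div_le_div_of_nonneg_right head_le d_pos.le
  · exact div_le_div_of_nonneg_right (anti hij) d_pos.le
  · exact div_nonneg (last_nonneg.trans last_lt.le) d_pos.le
  · change k * (y (Fin.last n).castSucc / _) ≤ 1
    rw [← mul_div_assoc, div_le_one d_pos]
    linarith
  · change 1 < (k + 1) * (y (Fin.last n).castSucc / _)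
    rw [← mul_div_assoc, one_lt_div d_pos]
    linarith

theorem rightInvOn_msaInverseBranch (hk : 0 < k) :
    Set.RightInvOn (msaInverseBranch k) msaS (msaRange n k) := by
  intro y hy
  have digit_eq : msaDigit (msaInverseBranch k y) = k := (mapsTo_msaInverseBranch hk hy).2
  have d_ne : (k : ℝ) * y (Fin.last n).castSucc + y (Fin.last (n + 1)) ≠ 0 :=
    (one_pos.trans_le hy.2.2).ne'
  rw [msaS_eq_snoc, digit_eq]
  funext i
  cases i using Fin.lastCases with
  | last =>
    rw [Fin.snoc_last]
    change (1 - k * (y (Fin.last n).castSucc / _)) / (1 / _) = _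
    field_simp
    ring
  | cast i =>
    rw [Fin.snoc_castSucc]
    change (y i.castSucc / _) / (1 / _) = _
    field_simp

theorem image_msaS_msaCylinder (hk : 0 < k) :
    msaS '' msaCylinder (n + 2) k = msaRange n k :=
  ((rightInvOn_msaInverseBranch hk).surjOn (mapsTo_msaInverseBranch hk)).image_eq_of_mapsTo
    (mapsTo_msaS hk)

theorem monotone_msaRange : Monotone (msaRange n) := by
  rintro k l hkl y ⟨mem_B, last_lt, one_le⟩
  have last_nonneg := (mem_Bset_succ.1 mem_B).2.2
  refine ⟨mem_B, last_lt, one_le.trans ?_⟩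
  gcongr
  exact last_nonneg.trans last_lt.le

theorem msaRange_ssubset (hl : 0 < l) (hkl : k < l) : msaRange n k ⊂ msaRange n l := by
  have hl' : (0 : ℝ) < l := Int.cast_pos.2 hl
  have inv_le : (l : ℝ)⁻¹ ≤ 1 := inv_le_one_of_one_le₀ (Int.cast_one_le_of_pos hl)
  refine (Set.ssubset_iff_of_subset (monotone_msaRange hkl.le)).2
    ⟨Fin.snoc (fun _ => (l : ℝ)⁻¹) 0, ⟨mem_Bset_succ.2 ⟨inv_le, ?_, ?_⟩, ?_, ?_⟩, ?_⟩
  · exact antitone_snoc_iff.2 ⟨antitone_const, (inv_pos.2 hl').le⟩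
  · rw [Fin.snoc_last]
  · simpa only [Fin.snoc_last, Fin.snoc_castSucc] using inv_pos.2 hl'
  · rw [Fin.snoc_last, Fin.snoc_castSucc, mul_inv_cancel₀ hl'.ne', add_zero]
  · rintro ⟨-, -, one_le⟩
    rw [Fin.snoc_last, Fin.snoc_castSucc, add_zero, ← div_eq_mul_inv, one_le_div hl',
      Int.cast_le] at one_le
    exact hkl.not_ge one_le

theorem msaRange_ne_Bset : msaRange n k ≠ Bset (n + 2) := fun h =>
  have zero_mem : 0 ∈ msaRange n k := h ▸ zero_mem_Bset
  lt_irrefl 0 zero_mem.2.1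

end Cylinder

theorem msa_cylinder_image_general (n : ℕ) (k : ℤ) (hk : 1 ≤ k) :
    msaS '' msaCylinder (n + 2) k = msaRange n k ∧
      msaS '' msaCylinder (n + 2) k ⊂ msaS '' msaCylinder (n + 2) (k + 1) ∧
      ∀ k' : ℤ, 1 ≤ k' → msaS '' msaCylinder (n + 2) k' ≠ Bset (n + 2) := by
  have hk_succ : 0 < k + 1 := by lia
  refine ⟨image_msaS_msaCylinder hk, ?_, fun k' hk' => ?_⟩
  · rw [image_msaS_msaCylinder hk, image_msaS_msaCylinder hk_succ]
    exact msaRange_ssubset hk_succ (lt_add_one k)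
  · rw [image_msaS_msaCylinder hk']
    exact msaRange_ne_Bset

/-- **No cylinder of the 2-dimensional MSA is full.** For every integer `k ≥ 1`,
`S '' B(k) = {y ∈ B² : y₂ < y₁ and k·y₁ + y₂ ≥ 1}`; consequently
`S '' B(k) ⊊ S '' B(k+1)` for all `k ≥ 1`, and no rank-1 cylinder is full:
`S '' B(k) ≠ B²` for every `k ≥ 1`. -/
theorem msa_cylinder_image (k : ℤ) (hk : 1 ≤ k) :
    msaS '' msaCell2 k
        = {y : Fin 2 → ℝ | y ∈ Bset 2 ∧ y 1 < y 0 ∧ 1 ≤ (k : ℝ) * y 0 + y 1} ∧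
      msaS '' msaCell2 k ⊂ msaS '' msaCell2 (k + 1) ∧
      ∀ k' : ℤ, 1 ≤ k' → msaS '' msaCell2 k' ≠ Bset 2 := by
  obtain ⟨image_eq, ssubset, ne_Bset⟩ := msa_cylinder_image_general 0 k hk
  rw [msaCell2_eq_msaCylinder hk, msaCell2_eq_msaCylinder (hk.trans (lt_add_one k).le)]
  exact ⟨image_eq, ssubset, fun k' hk' => msaCell2_eq_msaCylinder hk' ▸ ne_Bset k' hk'⟩
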